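/- Let H : D → ℝ be symmetric (invariant under every permutation of its three arguments), positively homogeneous of degree 1 (H(tx,ty,tz) = t·H(x,y,z) for all t > 0 and (x,y,z) ∈ D), and satisfy the entropy equation H(x,y,z) = H(x+y,0,z) + H(x,y,0) for all (x,y,z) ∈ D°. Then there exists a function φ : ℝ₊₊ → ℝ satisfying φ(xy) = x·φ(y) + y·φ(x) for all x,y > 0 such that H(x,y,z) = φ(x+y+z) − φ(x) − φ(y) − φ(z) for all (x,y,z) ∈ D°. -/

import Mathlib

structure GoodCoc (F : ℝ → ℝ → ℝ) : Prop where
  comm : ∀ x y, F x y = F y x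
  assoc : ∀ x y z, F x y + F (x + y) z = F y z + F x (y + z)
  hom : ∀ t x y, F (t * x) (t * y) = t * F x y
  neg : ∀ x, F x (-x) = 0

theorem GoodCoc.zero_left {F : ℝ → ℝ → ℝ} (h : GoodCoc F) (y : ℝ) : F 0 y = 0 := by
  have h1 := h.hom 0 0 0
  have h2 := h.assoc 0 0 y
  simp at h1 h2
  linarith

/-- the square-zero extension of the reals attached to a cocycle -/
@[ext] structure TwExt (F : ℝ → ℝ → ℝ) (h : GoodCoc F) where
  a : ℝ
  b : ℝ

namespace TwExt
variable {F : ℝ → ℝ → ℝ} {h : GoodCoc F}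

noncomputable instance : Add (TwExt F h) := ⟨fun p q => ⟨p.a + q.a, p.b + q.b + F p.a q.a⟩⟩
noncomputable instance : Mul (TwExt F h) := ⟨fun p q => ⟨p.a * q.a, p.a * q.b + q.a * p.b⟩⟩
noncomputable instance : Neg (TwExt F h) := ⟨fun p => ⟨-p.a, -p.b⟩⟩
noncomputable instance : Zero (TwExt F h) := ⟨⟨0, 0⟩⟩
noncomputable instance : One (TwExt F h) := ⟨⟨1, 0⟩⟩

@[simp] theorem add_a (p q : TwExt F h) : (p + q).a = p.a + q.a := rfl
@[simp] theorem add_b (p q : TwExt F h) : (p + q).b = p.b + q.b + F p.a q.a := rfl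
@[simp] theorem mul_a (p q : TwExt F h) : (p * q).a = p.a * q.a := rfl
@[simp] theorem mul_b (p q : TwExt F h) : (p * q).b = p.a * q.b + q.a * p.b := rfl
@[simp] theorem neg_a (p : TwExt F h) : (-p).a = -p.a := rfl
@[simp] theorem neg_b (p : TwExt F h) : (-p).b = -p.b := rfl
@[simp] theorem zero_a : (0 : TwExt F h).a = 0 := rfl
@[simp] theorem zero_b : (0 : TwExt F h).b = 0 := rfl
@[simp] theorem one_a : (1 : TwExt F h).a = 1 := rfl
@[simp] theorem one_b : (1 : TwExt F h).b = 0 := rfl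

theorem add_comm' (p q : TwExt F h) : p + q = q + p := by
  ext
  · simp [add_comm]
  · simp [h.comm p.a q.a, add_comm]

theorem mul_comm' (p q : TwExt F h) : p * q = q * p := by
  ext
  · simp [mul_comm]
  · simp [add_comm]

theorem zero_add' (p : TwExt F h) : 0 + p = p := by
  ext <;> simp [h.zero_left]

theorem one_mul' (p : TwExt F h) : 1 * p = p := by
  ext <;> simp

theorem left_distrib' (p q r : TwExt F h) : p * (q + r) = p * q + p * r := by
  ext
  · simp [mul_add]
  · simp only [mul_b, add_b, add_a, mul_a, h.hom]; ring

theorem zero_mul' (p : TwExt F h) : 0 * p = 0 := by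
  ext <;> simp

noncomputable instance : CommRing (TwExt F h) where
  add_assoc p q r := by
    ext
    · simp [add_assoc]
    · have := h.assoc p.a q.a r.a
      simp only [add_b, add_a]; linarith
  zero_add := zero_add'
  add_zero p := by rw [add_comm', zero_add']
  add_comm := add_comm'
  left_distrib := left_distrib'
  right_distrib p q r := by
    rw [mul_comm', left_distrib', mul_comm' r, mul_comm' r]
  zero_mul := zero_mul'
  mul_zero p := by rw [mul_comm', zero_mul']
  mul_assoc p q r := by
    ext
    · simp [mul_assoc]
    · simp; ring
  one_mul := one_mul'
  mul_one p := by rw [mul_comm', one_mul']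
  mul_comm := mul_comm'
  neg_add_cancel p := by
    rw [add_comm']
    ext <;> simp [h.neg]
  nsmul := nsmulRec
  zsmul := zsmulRec

noncomputable def proj (F : ℝ → ℝ → ℝ) (h : GoodCoc F) : TwExt F h →+* ℝ where
  toFun p := p.a
  map_one' := rfl
  map_mul' _ _ := rfl
  map_zero' := rfl
  map_add' _ _ := rfl

end TwExt

theorem formallySmooth_int_real : Algebra.FormallySmooth ℤ ℝ := by
  have h1 : Algebra.FormallySmooth ℤ ℚ := .of_isLocalization (nonZeroDivisors ℤ)
  have h2 : Algebra.FormallySmooth ℚ ℝ := by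
    obtain ⟨s, hs⟩ := exists_isTranscendenceBasis ℚ ℝ
    have := hs.isAlgebraic_field
    have : Algebra.IsSeparable (IntermediateField.adjoin ℚ (Set.range ((↑) : s → ℝ))) ℝ :=
      inferInstance
    exact .of_algebraicIndependent_of_isSeparable hs.1
  exact .comp ℤ ℚ ℝ

theorem GoodCoc.exists_phi {F : ℝ → ℝ → ℝ} (h : GoodCoc F) :
    ∃ φ : ℝ → ℝ, (∀ x y, φ (x * y) = x * φ y + y * φ x) ∧
      ∀ x y, φ (x + y) = φ x + φ y + F x y := by
  have := formallySmooth_int_real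
  let g : TwExt F h →ₐ[ℤ] ℝ := (TwExt.proj F h).toIntAlgHom
  have hga : ∀ p, g p = p.a := fun _ => rfl
  have hg : Function.Surjective g := fun x => ⟨⟨x, 0⟩, rfl⟩
  have hk : IsNilpotent (RingHom.ker (g : TwExt F h →+* ℝ)) := by
    refine ⟨2, ?_⟩
    rw [pow_two, Ideal.zero_eq_bot, eq_bot_iff, Ideal.mul_le]
    intro r hr s hs
    have hr' : r.a = 0 := hr
    have hs' : s.a = 0 := hs
    rw [Ideal.mem_bot]
    ext <;> simp [hr', hs']
  let s := Algebra.FormallySmooth.liftOfSurjective (AlgHom.id ℤ ℝ) g hg hk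
  have hs : ∀ x, (s x).a = x := fun x =>
    Algebra.FormallySmooth.liftOfSurjective_apply (AlgHom.id ℤ ℝ) g hg hk x
  refine ⟨fun x => (s x).b, fun x y => ?_, fun x y => ?_⟩
  · simp [hs]
  · simp [hs]

section Ext
open Classical in
noncomputable def PP (f : ℝ → ℝ → ℝ) (x y : ℝ) : ℝ := if 0 < x ∧ 0 < y then f x y else 0

noncomputable def FF (f : ℝ → ℝ → ℝ) (x y : ℝ) : ℝ :=
  PP f x y - PP f (-x) (-y) - PP f (x + y) (-y) - PP f (x + y) (-x)
    + PP f x (-x - y) + PP f y (-x - y)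

variable {f : ℝ → ℝ → ℝ}

theorem PP_l (x y : ℝ) (h : x ≤ 0) : PP f x y = 0 := by
  simp [PP, not_lt.2 h]
theorem PP_r (x y : ℝ) (h : y ≤ 0) : PP f x y = 0 := by
  simp [PP, not_lt.2 h]

theorem PP_comm (hc : ∀ x y, 0 < x → 0 < y → f x y = f y x) (x y : ℝ) :
    PP f x y = PP f y x := by
  unfold PP
  by_cases hx : 0 < x <;> by_cases hy : 0 < y <;> simp [hx, hy]
  exact hc x y hx hy

theorem PP_hom (hh : ∀ t x y, 0 < t → 0 < x → 0 < y → f (t * x) (t * y) = t * f x y)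
    (t x y : ℝ) (ht : 0 < t) : PP f (t * x) (t * y) = t * PP f x y := by
  unfold PP
  by_cases hx : 0 < x <;> by_cases hy : 0 < y <;> simp [hx, hy, ht]
  exact hh t x y ht hx hy

theorem PP_assoc
    (ha : ∀ x y z, 0 < x → 0 < y → 0 < z → f x y + f (x + y) z = f y z + f x (y + z))
    (x y z : ℝ) (hx : 0 ≤ x) (hy : 0 ≤ y) (hz : 0 ≤ z) :
    PP f x y + PP f (x + y) z = PP f y z + PP f x (y + z) := by
  rcases hx.eq_or_lt with rfl | hx
  · simp [PP_l]
  rcases hy.eq_or_lt with rfl | hy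
  · simp [PP_l, PP_r]
  rcases hz.eq_or_lt with rfl | hz
  · simp [PP_r]
  have h1 : 0 < x + y := by positivity
  have h2 : 0 < y + z := by positivity
  simp [PP, hx, hy, hz, h1, h2, ha x y z hx hy hz]

theorem FF_comm (hc : ∀ x y, 0 < x → 0 < y → f x y = f y x) (x y : ℝ) :
    FF f x y = FF f y x := by
  unfold FF
  rw [PP_comm hc x y, PP_comm hc (-x) (-y), add_comm x y, show -x - y = -y - x by ring]
  ring

theorem FF_neg (hc : ∀ x y, 0 < x → 0 < y → f x y = f y x) (x y : ℝ) :
    FF f (-x) (-y) = - FF f x y := by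
  unfold FF
  rw [PP_comm hc (-x + -y), PP_comm hc (-x + -y), PP_comm hc (x + y), PP_comm hc (x + y)]
  simp only [neg_neg, sub_neg_eq_add, ← sub_eq_add_neg]
  ring

theorem FF_V1 (x y : ℝ) (hx : 0 ≤ x) (hy : 0 ≤ y) : FF f x y = PP f x y := by
  unfold FF
  rw [PP_l (-x) (-y) (by linarith), PP_r (x + y) (-y) (by linarith),
    PP_r (x + y) (-x) (by linarith), PP_r x (-x - y) (by linarith), PP_r y (-x - y) (by linarith)]
  ring

theorem FF_V2 (x y : ℝ) (hy : 0 ≤ y) (hxy : y ≤ x) : FF f x (-y) = - PP f (x - y) y := by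
  unfold FF
  rw [PP_r x (-y) (by linarith), PP_l (-x) (- -y) (by linarith),
    PP_r (x + -y) (-x) (by linarith), PP_r x (-x - -y) (by linarith),
    PP_r (-y) (-x - -y) (by linarith), neg_neg, ← sub_eq_add_neg]
  ring

theorem FF_V3 (x y : ℝ) (hx : 0 ≤ x) (hxy : x ≤ y) : FF f x (-y) = PP f x (y - x) := by
  unfold FF
  rw [PP_r x (-y) (by linarith), PP_l (-x) (- -y) (by linarith),
    PP_r (x + -y) (-x) (by linarith), PP_l (x + -y) (- -y) (by linarith),
    PP_l (-y) (-x - -y) (by linarith), show -x - -y = y - x by ring]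
  ring

def Pairs (F : ℝ → ℝ → ℝ) (a b c d : ℝ) : Prop :=
  F a b + F c d = F a c + F b d ∧ F a b + F c d = F a d + F b c

theorem pairs31 (hc : ∀ x y, 0 < x → 0 < y → f x y = f y x)
    (ha : ∀ x y z, 0 < x → 0 < y → 0 < z → f x y + f (x + y) z = f y z + f x (y + z))
    (a b c d : ℝ) (h0 : a + b + c + d = 0) (h1 : 0 ≤ a) (h2 : 0 ≤ b) (h3 : 0 ≤ c) :
    Pairs (FF f) a b c d := by
  obtain rfl : d = -(a + b + c) := by linarith
  have e1 := PP_assoc ha a b c h1 h2 h3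
  have e2 := PP_assoc ha b a c h2 h1 h3
  unfold Pairs
  rw [FF_V1 a b h1 h2, FF_V1 a c h1 h3, FF_V1 b c h2 h3, FF_V3 a _ h1 (by linarith),
    FF_V3 b _ h2 (by linarith), FF_V3 c _ h3 (by linarith),
    show a + b + c - c = a + b by ring, show a + b + c - a = b + c by ring,
    show a + b + c - b = a + c by ring]
  rw [PP_comm hc c (a + b)]
  rw [PP_comm hc b a, add_comm b a] at e2
  constructor <;> linarith

/-- core identity for two positive and two negative terms -/
theorem pairs22_aux (hc : ∀ x y, 0 < x → 0 < y → f x y = f y x)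
    (ha : ∀ x y z, 0 < x → 0 < y → 0 < z → f x y + f (x + y) z = f y z + f x (y + z))
    (p q r s : ℝ) (h0 : p + q = r + s) (h1 : 0 ≤ p) (h2 : 0 ≤ q) (h3 : 0 ≤ r) (h4 : 0 ≤ s) :
    PP f p q - PP f r s = FF f p (-r) + FF f q (-s) := by
  rcases le_total r p with h | h
  · rw [FF_V2 p r h3 h, FF_V3 q s h2 (by linarith), show s - q = p - r by linarith]
    have e := PP_assoc ha r (p - r) q h3 (by linarith) h2
    rw [show r + (p - r) = p by ring, show p - r + q = s by linarith] at e
    rw [PP_comm hc (p - r) r, PP_comm hc q (p - r)]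
    linarith
  · rw [FF_V3 p r h1 h, FF_V2 q s h4 (by linarith), show q - s = r - p by linarith]
    have e := PP_assoc ha p (r - p) s h1 (by linarith) h4
    rw [show p + (r - p) = r by ring, show r - p + s = q by linarith] at e
    linarith

theorem pairs22 (hc : ∀ x y, 0 < x → 0 < y → f x y = f y x)
    (ha : ∀ x y z, 0 < x → 0 < y → 0 < z → f x y + f (x + y) z = f y z + f x (y + z))
    (a b c d : ℝ) (h0 : a + b + c + d = 0) (h1 : 0 ≤ a) (h2 : 0 ≤ b) (h3 : c ≤ 0) (h4 : d ≤ 0) :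
    Pairs (FF f) a b c d := by
  obtain ⟨r, rfl⟩ : ∃ r, c = -r := ⟨-c, by ring⟩
  obtain ⟨s, rfl⟩ : ∃ r, d = -r := ⟨-d, by ring⟩
  have e1 := pairs22_aux hc ha a b r s (by linarith) h1 h2 (by linarith) (by linarith)
  have e2 := pairs22_aux hc ha a b s r (by linarith) h1 h2 (by linarith) (by linarith)
  unfold Pairs
  rw [FF_neg hc, FF_V1 a b h1 h2, FF_V1 r s (by linarith) (by linarith)]
  rw [PP_comm hc s r] at e2
  constructor <;> linarith

theorem pairs_all (hc : ∀ x y, 0 < x → 0 < y → f x y = f y x)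
    (ha : ∀ x y z, 0 < x → 0 < y → 0 < z → f x y + f (x + y) z = f y z + f x (y + z))
    (a b c d : ℝ) (h0 : a + b + c + d = 0) :
    Pairs (FF f) a b c d := by
  have sw1 : ∀ a b c d, Pairs (FF f) a b c d → Pairs (FF f) b a c d := by
    rintro a b c d ⟨h1, h2⟩
    unfold Pairs
    rw [FF_comm hc b a]; constructor <;> linarith
  have sw2 : ∀ a b c d, Pairs (FF f) a b c d → Pairs (FF f) a c b d := by
    rintro a b c d ⟨h1, h2⟩
    unfold Pairs
    rw [FF_comm hc c b]; constructor <;> linarith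
  have sw3 : ∀ a b c d, Pairs (FF f) a b c d → Pairs (FF f) a b d c := by
    rintro a b c d ⟨h1, h2⟩
    unfold Pairs
    rw [FF_comm hc d c]; constructor <;> linarith
  have ng : ∀ a b c d, Pairs (FF f) (-a) (-b) (-c) (-d) → Pairs (FF f) a b c d := by
    rintro a b c d ⟨h1, h2⟩
    simp only [FF_neg hc] at h1 h2
    constructor <;> linarith
  have A := pairs31 hc ha
  have A' : ∀ a b c d : ℝ, a + b + c + d = 0 → a ≤ 0 → b ≤ 0 → c ≤ 0 →
      Pairs (FF f) a b c d := fun a b c d h0 h1 h2 h3 =>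
    ng _ _ _ _ (A _ _ _ _ (by linarith) (by linarith) (by linarith) (by linarith))
  have B := pairs22 hc ha
  rcases le_total 0 a with h1 | h1 <;> rcases le_total 0 b with h2 | h2 <;>
    rcases le_total 0 c with h3 | h3 <;> rcases le_total 0 d with h4 | h4
  · exact A a b c d h0 h1 h2 h3
  · exact A a b c d h0 h1 h2 h3
  · exact sw3 _ _ _ _ (A a b d c (by linarith) h1 h2 h4)
  · exact B a b c d h0 h1 h2 h3 h4
  · exact sw2 _ _ _ _ (sw3 _ _ _ _ (A a c d b (by linarith) h1 h3 h4))
  · exact sw2 _ _ _ _ (B a c b d (by linarith) h1 h3 h2 h4)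
  · exact sw3 _ _ _ _ (sw2 _ _ _ _ (B a d b c (by linarith) h1 h4 h2 h3))
  · exact sw1 _ _ _ _ (sw2 _ _ _ _ (sw3 _ _ _ _ (A' b c d a (by linarith) h2 h3 h4)))
  · exact sw1 _ _ _ _ (sw2 _ _ _ _ (sw3 _ _ _ _ (A b c d a (by linarith) h2 h3 h4)))
  · exact sw1 _ _ _ _ (sw2 _ _ _ _ (B b c a d (by linarith) h2 h3 h1 h4))
  · exact sw1 _ _ _ _ (sw3 _ _ _ _ (sw2 _ _ _ _ (B b d a c (by linarith) h2 h4 h1 h3)))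
  · exact sw2 _ _ _ _ (sw3 _ _ _ _ (A' a c d b (by linarith) h1 h3 h4))
  · exact sw2 _ _ _ _ (sw1 _ _ _ _ (sw3 _ _ _ _ (sw2 _ _ _ _
      (B c d a b (by linarith) h3 h4 h1 h2))))
  · exact sw3 _ _ _ _ (A' a b d c (by linarith) h1 h2 h4)
  · exact A' a b c d h0 h1 h2 h3
  · exact A' a b c d h0 h1 h2 h3

theorem FF_third (hc : ∀ x y, 0 < x → 0 < y → f x y = f y x) (x y : ℝ) :
    FF f x y = FF f y (-(x + y)) := by
  unfold FF
  rw [show y + -(x + y) = -x by ring, show -y - -(x + y) = x by ring, neg_neg,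
    show -x - y = -(x + y) by ring, PP_comm hc y x, PP_comm hc (-x) (-y),
    PP_comm hc (x + y) (-y), PP_comm hc (x + y) (-x), PP_comm hc (-(x + y)) x]
  ring

theorem FF_good (hc : ∀ x y, 0 < x → 0 < y → f x y = f y x)
    (ha : ∀ x y z, 0 < x → 0 < y → 0 < z → f x y + f (x + y) z = f y z + f x (y + z))
    (hh : ∀ t x y, 0 < t → 0 < x → 0 < y → f (t * x) (t * y) = t * f x y) :
    GoodCoc (FF f) where
  comm := FF_comm hc
  assoc x y z := by
    have := (pairs_all hc ha x y z (-(x + y + z)) (by ring)).2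
    rw [FF_third hc (x + y) z, FF_comm hc x (y + z), FF_third hc (y + z) x,
      show y + z + x = x + y + z by ring]
    linarith
  hom t x y := by
    have key : ∀ t, 0 < t → ∀ x y, FF f (t * x) (t * y) = t * FF f x y := by
      intro t ht x y
      unfold FF
      rw [show -(t * x) = t * (-x) by ring, show -(t * y) = t * (-y) by ring,
        show t * x + t * y = t * (x + y) by ring, show t * -x - t * y = t * (-x - y) by ring]
      simp only [PP_hom hh _ _ _ ht]
      ring
    rcases lt_trichotomy t 0 with ht | rfl | ht
    · have := key (-t) (by linarith) x y
      rw [neg_mul, neg_mul, FF_neg hc] at this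
      linarith
    · simp [FF, PP]
    · exact key t ht x y
  neg x := by
    rcases le_total 0 x with h | h
    · rw [FF_V2 x x h le_rfl, PP_l _ _ (by linarith), neg_zero]
    · rw [FF_comm hc]
      have := FF_V2 (f := f) (-x) (-x) (by linarith) le_rfl
      rw [neg_neg] at this
      rw [this, PP_l _ _ (by linarith), neg_zero]

end Ext

/-- If `H` is symmetric on `D`, positively homogeneous of degree 1 on `D` and
satisfies the entropy equation on `D°`, then `H(x,y,z) = φ(x+y+z) − φ(x) − φ(y) − φ(z)`
on `D°` for some `φ` with `φ(xy) = x·φ(y) + y·φ(x)`. -/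
theorem entropy_equation_solution_alpha_one
    (H : ℝ → ℝ → ℝ → ℝ)
    (hsym : ∀ x y z : ℝ, 0 ≤ x → 0 ≤ y → 0 ≤ z → 0 < x + y + z →
      ∀ σ : Equiv.Perm (Fin 3),
        H x y z = H (![x, y, z] (σ 0)) (![x, y, z] (σ 1)) (![x, y, z] (σ 2)))
    (hhom : ∀ t : ℝ, 0 < t → ∀ x y z : ℝ, 0 ≤ x → 0 ≤ y → 0 ≤ z → 0 < x + y + z →
      H (t * x) (t * y) (t * z) = t * H x y z)
    (heq : ∀ x y z : ℝ, 0 < x → 0 < y → 0 < z →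
      H x y z = H (x + y) 0 z + H x y 0) :
    ∃ φ : ℝ → ℝ,
      (∀ x y : ℝ, 0 < x → 0 < y → φ (x * y) = x * φ y + y * φ x) ∧
      (∀ x y z : ℝ, 0 < x → 0 < y → 0 < z →
        H x y z = φ (x + y + z) - φ x - φ y - φ z) := by
  have s01 : ∀ x y z : ℝ, 0 ≤ x → 0 ≤ y → 0 ≤ z → 0 < x + y + z → H x y z = H y x z := by
    intro x y z hx hy hz h
    have := hsym x y z hx hy hz h (Equiv.swap 0 1)
    rwa [Equiv.swap_apply_left, Equiv.swap_apply_right,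
      Equiv.swap_apply_of_ne_of_ne (by decide) (by decide)] at this
  have s12 : ∀ x y z : ℝ, 0 ≤ x → 0 ≤ y → 0 ≤ z → 0 < x + y + z → H x y z = H x z y := by
    intro x y z hx hy hz h
    have := hsym x y z hx hy hz h (Equiv.swap 1 2)
    rwa [Equiv.swap_apply_left, Equiv.swap_apply_right,
      Equiv.swap_apply_of_ne_of_ne (by decide) (by decide)] at this
  have hc : ∀ x y, 0 < x → 0 < y → H x y 0 = H y x 0 := fun x y hx hy =>
    s01 x y 0 hx.le hy.le le_rfl (by linarith)
  have he : ∀ x y z, 0 < x → 0 < y → 0 < z → H x y z = H x y 0 + H (x + y) z 0 := by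
    intro x y z hx hy hz
    rw [heq x y z hx hy hz, s12 (x + y) 0 z (by linarith) le_rfl hz.le (by linarith)]
    ring
  have hg : GoodCoc (FF (fun x y => H x y 0)) := by
    refine FF_good hc ?_ ?_
    · intro x y z hx hy hz
      change H x y 0 + H (x + y) z 0 = H y z 0 + H x (y + z) 0
      rw [← he x y z hx hy hz, hc x (y + z) hx (by linarith), ← he y z x hy hz hx,
        s01 x y z hx.le hy.le hz.le (by linarith), s12 y x z hy.le hx.le hz.le (by linarith)]
    · intro t x y ht hx hy
      have := hhom t ht x y 0 hx.le hy.le le_rfl (by linarith)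
      rwa [mul_zero] at this
  obtain ⟨φ, h1, h2⟩ := hg.exists_phi
  have hF : ∀ x y, 0 < x → 0 < y → φ (x + y) = φ x + φ y + H x y 0 := by
    intro x y hx hy
    rw [h2, FF_V1 x y hx.le hy.le, PP, if_pos ⟨hx, hy⟩]
  refine ⟨φ, fun x y _ _ => h1 x y, fun x y z hx hy hz => ?_⟩
  rw [he x y z hx hy hz, hF (x + y) z (by linarith) hz, hF x y hx hy]
  ring
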